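/- Lipschitz subspace score implies Lipschitz full score: if for some t ≥ 0 the map y ↦ ∇ log p_t^fac(y) is L-Lipschitz on ℝ^k, then r ↦ ∇ log p_t(r) is Lipschitz on ℝ^d with constant at most L·((h_t + σ_1² α_t²)/(h_t + σ_d² α_t²))² + 1/(h_t + σ_d² α_t²). -/

import Mathlib

open MeasureTheory Matrix

noncomputable section

/-- Euclidean (ℓ²) norm on `Fin n → ℝ`. -/
def eucNorm {n : ℕ} (x : Fin n → ℝ) : ℝ := Real.sqrt (∑ i, x i ^ 2)

/-- The `n`-dimensional Gaussian density `φ(x; μ, S)`. -/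
def gaussD (n : ℕ) (x μ : Fin n → ℝ) (S : Matrix (Fin n) (Fin n) ℝ) : ℝ :=
  (2 * Real.pi) ^ (-(n : ℝ) / 2) * S.det ^ (-(1 : ℝ) / 2) *
    Real.exp (-((x - μ) ⬝ᵥ (S⁻¹ *ᵥ (x - μ))) / 2)

/-- Gradient as the vector of partial derivatives. -/
def gradv {n : ℕ} (f : (Fin n → ℝ) → ℝ) (x : Fin n → ℝ) : Fin n → ℝ :=
  fun i => fderiv ℝ f x (Pi.single i 1)

/-- `α_t = e^{-t/2}`. -/
def af (t : ℝ) : ℝ := Real.exp (-t / 2)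

/-- `h_t = 1 - α_t²`. -/
def hf (t : ℝ) : ℝ := 1 - af t ^ 2

/-- `Λ_t = diag(h_t + σ_i² α_t²)`. -/
def Lam {d : ℕ} (σ : Fin d → ℝ) (t : ℝ) : Matrix (Fin d) (Fin d) ℝ :=
  Matrix.diagonal fun i => hf t + σ i ^ 2 * af t ^ 2

/-- `Λ_t^{-1/2}`. -/
def LamInvSqrt {d : ℕ} (σ : Fin d → ℝ) (t : ℝ) : Matrix (Fin d) (Fin d) ℝ :=
  Matrix.diagonal fun i => (Real.sqrt (hf t + σ i ^ 2 * af t ^ 2))⁻¹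

/-- `Γ_t = (βᵀ Λ_t⁻¹ β)⁻¹`. -/
def Gam {d k : ℕ} (β : Matrix (Fin d) (Fin k) ℝ) (σ : Fin d → ℝ) (t : ℝ) :
    Matrix (Fin k) (Fin k) ℝ :=
  (βᵀ * (Lam σ t)⁻¹ * β)⁻¹

/-- `T_t = Λ_t^{-1/2} β Γ_t βᵀ Λ_t^{-1/2}`. -/
def Tproj {d k : ℕ} (β : Matrix (Fin d) (Fin k) ℝ) (σ : Fin d → ℝ) (t : ℝ) :
    Matrix (Fin d) (Fin d) ℝ :=
  LamInvSqrt σ t * β * Gam β σ t * βᵀ * LamInvSqrt σ t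

/-- Time-`t` marginal density `p_t`. -/
def pT {d k : ℕ} (β : Matrix (Fin d) (Fin k) ℝ) (σ : Fin d → ℝ)
    (pfac : (Fin k → ℝ) → ℝ) (t : ℝ) (r : Fin d → ℝ) : ℝ :=
  ∫ f : Fin k → ℝ, gaussD d r (af t • (β *ᵥ f)) (Lam σ t) * pfac f

/-- Smoothed factor density `p_t^fac`. -/
def pTfac {d k : ℕ} (β : Matrix (Fin d) (Fin k) ℝ) (σ : Fin d → ℝ)
    (pfac : (Fin k → ℝ) → ℝ) (t : ℝ) (y : Fin k → ℝ) : ℝ :=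
  ∫ f : Fin k → ℝ, gaussD k y (af t • f) (Gam β σ t) * pfac f

/-!
Write `W = Λ_t^{-1/2}` and `A = Γ_t βᵀ Λ_t⁻¹`, so that `A r` is the least-squares coefficient
vector of `W r` in the columns of `W β` and `T_t` is the orthogonal projection onto their span. By
Pythagoras, `‖W r - W β g‖² = ‖W β (A r - g)‖² + ‖(1 - T_t) W r‖²`; hence, up to a constant factor,
`p_t r` is `exp (-‖(1 - T_t) W r‖² / 2) * p_t^fac (A r)`, and
`∇ log p_t r = Aᵀ ∇ log p_t^fac (A r) - W (1 - T_t) W r`. This map is Lipschitz with constant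
`L ‖A‖² + ‖W (1 - T_t) W‖`, where `‖A‖² ≤ max Λ_t / min Λ_t` and `‖W (1 - T_t) W‖ ≤ 1 / min Λ_t`.
-/

/-! ### The Euclidean norm -/

section EuclideanNorm

variable {n : ℕ}

theorem eucNorm_eq_norm_toLp (x : Fin n → ℝ) : eucNorm x = ‖WithLp.toLp 2 x‖ := by
  simp only [eucNorm, EuclideanSpace.norm_eq, Real.norm_eq_abs, sq_abs]

theorem eucNorm_nonneg (x : Fin n → ℝ) : 0 ≤ eucNorm x := Real.sqrt_nonneg _

theorem eucNorm_sq_eq_dotProduct (x : Fin n → ℝ) : eucNorm x ^ 2 = x ⬝ᵥ x := by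
  rw [eucNorm, Real.sq_sqrt (Finset.sum_nonneg fun i _ => sq_nonneg _)]
  simp only [dotProduct, sq]

theorem eucNorm_sub_le (x y : Fin n → ℝ) : eucNorm (x - y) ≤ eucNorm x + eucNorm y := by
  simpa only [eucNorm_eq_norm_toLp, WithLp.toLp_sub] using norm_sub_le _ _

theorem eucNorm_add_sq_of_dotProduct_eq_zero {x y : Fin n → ℝ} (h : x ⬝ᵥ y = 0) :
    eucNorm (x + y) ^ 2 = eucNorm x ^ 2 + eucNorm y ^ 2 := by
  simp only [eucNorm_sq_eq_dotProduct, add_dotProduct, dotProduct_add, dotProduct_comm y x, h]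
  ring

open scoped Matrix.Norms.L2Operator in
theorem eucNorm_mulVec_le {m : ℕ} (A : Matrix (Fin m) (Fin n) ℝ) (x : Fin n → ℝ) :
    eucNorm (A *ᵥ x) ≤ ‖A‖ * eucNorm x := by
  simp only [eucNorm_eq_norm_toLp]
  exact l2_opNorm_mulVec A (WithLp.toLp 2 x)

theorem nonneg_of_eucNorm_sub_le {m : ℕ} (hn : 0 < n) {s : (Fin n → ℝ) → (Fin m → ℝ)} {L : ℝ}
    (hs : ∀ x y, eucNorm (s x - s y) ≤ L * eucNorm (x - y)) : 0 ≤ L := by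
  have hunit : eucNorm ((Pi.single ⟨0, hn⟩ 1 : Fin n → ℝ) - 0) = 1 := by
    rw [sub_zero, eucNorm_eq_norm_toLp, PiLp.toLp_single, PiLp.norm_single, norm_one]
  simpa only [hunit, mul_one] using (eucNorm_nonneg _).trans (hs (Pi.single ⟨0, hn⟩ 1) 0)

open scoped Matrix.Norms.L2Operator in
theorem eucNorm_transpose_mulVec_comp_sub_mulVec_sub_le {m : ℕ} {s : (Fin m → ℝ) → (Fin m → ℝ)}
    {L : ℝ} (hL : 0 ≤ L) (hs : ∀ x y, eucNorm (s x - s y) ≤ L * eucNorm (x - y))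
    (A : Matrix (Fin m) (Fin n) ℝ) (M : Matrix (Fin n) (Fin n) ℝ) (x y : Fin n → ℝ) :
    eucNorm ((Aᵀ *ᵥ s (A *ᵥ x) - M *ᵥ x) - (Aᵀ *ᵥ s (A *ᵥ y) - M *ᵥ y))
      ≤ (L * ‖A‖ ^ 2 + ‖M‖) * eucNorm (x - y) := by
  have hA : ‖Aᵀ‖ = ‖A‖ := by
    rw [← conjTranspose_eq_transpose_of_trivial, l2_opNorm_conjTranspose]
  calc
    _ = eucNorm (Aᵀ *ᵥ (s (A *ᵥ x) - s (A *ᵥ y)) - M *ᵥ (x - y)) := by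
      rw [mulVec_sub, mulVec_sub, sub_sub_sub_comm]
    _ ≤ ‖A‖ * eucNorm (s (A *ᵥ x) - s (A *ᵥ y)) + ‖M‖ * eucNorm (x - y) :=
      (eucNorm_sub_le _ _).trans
        (add_le_add (hA ▸ eucNorm_mulVec_le _ _) (eucNorm_mulVec_le _ _))
    _ ≤ ‖A‖ * (L * (‖A‖ * eucNorm (x - y))) + ‖M‖ * eucNorm (x - y) := by
      gcongr
      refine (hs _ _).trans ?_
      rw [← mulVec_sub]
      gcongr
      exact eucNorm_mulVec_le _ _
    _ = (L * ‖A‖ ^ 2 + ‖M‖) * eucNorm (x - y) := by ring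

end EuclideanNorm

/-! ### Least squares -/

section LeastSquares

variable {m n : Type*} [Fintype m] [Fintype n] [DecidableEq n]

/-- The least-squares coefficient matrix `(BᵀB)⁻¹Bᵀ`. It is the Moore–Penrose inverse of `B` when
the columns of `B` are linearly independent, and is only meaningful in that case. -/
def leastSquares (B : Matrix m n ℝ) : Matrix n m ℝ := (Bᵀ * B)⁻¹ * Bᵀ

/-- The matrix `B(BᵀB)⁻¹Bᵀ` of the orthogonal projection onto the column space of `B`, for `B` with
linearly independent columns. -/
def columnProj (B : Matrix m n ℝ) : Matrix m m ℝ := B * leastSquares B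

variable {B : Matrix m n ℝ}

theorem mulVec_injective_of_mul_eq_one {C : Matrix n m ℝ} (h : C * B = 1) :
    Function.Injective B.mulVec :=
  Function.LeftInverse.injective (g := C.mulVec) fun x => by rw [mulVec_mulVec, h, one_mulVec]

theorem posDef_gram {m n : Type*} [Fintype m] [Fintype n] {B : Matrix m n ℝ}
    (hB : Function.Injective B.mulVec) : (Bᵀ * B).PosDef := by
  rw [← conjTranspose_eq_transpose_of_trivial]
  exact PosDef.conjTranspose_mul_self B hB

theorem isUnit_det_gram (hB : Function.Injective B.mulVec) : IsUnit (Bᵀ * B).det :=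
  (posDef_gram hB).det_pos.ne'.isUnit

theorem leastSquares_mul_self (hB : Function.Injective B.mulVec) : leastSquares B * B = 1 := by
  rw [leastSquares, Matrix.mul_assoc, nonsing_inv_mul _ (isUnit_det_gram hB)]

theorem columnProj_mul_self (hB : Function.Injective B.mulVec) : columnProj B * B = B := by
  rw [columnProj, Matrix.mul_assoc, leastSquares_mul_self hB, Matrix.mul_one]

theorem columnProj_transpose (B : Matrix m n ℝ) : (columnProj B)ᵀ = columnProj B := by
  simp only [columnProj, leastSquares, transpose_mul, transpose_nonsing_inv, transpose_transpose,
    Matrix.mul_assoc]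

theorem isStarProjection_columnProj (hB : Function.Injective B.mulVec) :
    IsStarProjection (columnProj B) where
  isIdempotentElem := by
    rw [IsIdempotentElem, columnProj, Matrix.mul_assoc, ← Matrix.mul_assoc (leastSquares B),
      leastSquares_mul_self hB, Matrix.one_mul]
  isSelfAdjoint := by
    rw [IsSelfAdjoint, star_eq_conjTranspose, conjTranspose_eq_transpose_of_trivial,
      columnProj_transpose]

theorem nonempty_of_transpose_mul_self_eq_one {m n : Type*} [Fintype m] [DecidableEq n] [Nonempty n]
    {B : Matrix m n ℝ} (hB : Bᵀ * B = 1) : Nonempty m := by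
  by_contra hm
  have := not_nonempty_iff.mp hm
  obtain ⟨j⟩ := ‹Nonempty n›
  simpa [mul_apply] using congrFun₂ hB j j

section OpNorm

open scoped Matrix.Norms.L2Operator

theorem l2_opNorm_le_one_of_transpose_mul_self_eq_one (hB : Bᵀ * B = 1) : ‖B‖ ≤ 1 := by
  have h : ‖B‖ * ‖B‖ ≤ 1 := by
    rw [← l2_opNorm_conjTranspose_mul_self, conjTranspose_eq_transpose_of_trivial, hB]
    exact IsStarProjection.norm_le 1 (.one _)
  exact (le_abs_self _).trans (abs_le_one_iff_mul_self_le_one.mpr h)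

-- The factorisation `leastSquares (W * B) = Bᵀ * R * columnProj (W * B)` costs a single factor `R`;
-- bounding `((W * B)ᵀ * (W * B))⁻¹` and `(W * B)ᵀ` separately would cost `‖R‖ ^ 2 * ‖W‖`.
theorem l2_opNorm_leastSquares_mul_le [DecidableEq m] (hB : Bᵀ * B = 1) {R W : Matrix m m ℝ}
    (hRW : R * W = 1) : ‖leastSquares (W * B)‖ ≤ ‖R‖ := by
  have hWB : Bᵀ * R * (W * B) = 1 := by
    rw [Matrix.mul_assoc, ← Matrix.mul_assoc R, hRW, Matrix.one_mul, hB]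
  have hfactor : leastSquares (W * B) = Bᵀ * R * columnProj (W * B) := by
    rw [columnProj, ← Matrix.mul_assoc, hWB, Matrix.one_mul]
  have hBT : ‖Bᵀ‖ ≤ 1 := by
    rw [← conjTranspose_eq_transpose_of_trivial, l2_opNorm_conjTranspose]
    exact l2_opNorm_le_one_of_transpose_mul_self_eq_one hB
  calc
    ‖leastSquares (W * B)‖ = ‖Bᵀ * R * columnProj (W * B)‖ := by rw [hfactor]
    _ ≤ ‖Bᵀ‖ * ‖R‖ * ‖columnProj (W * B)‖ :=
      (l2_opNorm_mul _ _).trans (by gcongr; exact l2_opNorm_mul _ _)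
    _ ≤ 1 * ‖R‖ * 1 := by
      gcongr
      exact (isStarProjection_columnProj (mulVec_injective_of_mul_eq_one hWB)).norm_le
    _ = ‖R‖ := by ring

end OpNorm

theorem eucNorm_sub_mulVec_sq {m n : ℕ} {B : Matrix (Fin m) (Fin n) ℝ}
    (hB : Function.Injective B.mulVec) (u : Fin m → ℝ) (g : Fin n → ℝ) :
    eucNorm (u - B *ᵥ g) ^ 2
      = eucNorm (B *ᵥ (leastSquares B *ᵥ u - g)) ^ 2 + eucNorm ((1 - columnProj B) *ᵥ u) ^ 2 := by
  have hsplit : u - B *ᵥ g = B *ᵥ (leastSquares B *ᵥ u - g) + (1 - columnProj B) *ᵥ u := by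
    rw [mulVec_sub, mulVec_mulVec, ← columnProj, sub_mulVec, one_mulVec]
    abel
  have hker : Bᵀ * (1 - columnProj B) = 0 := by
    rw [← transpose_inj, transpose_mul, transpose_sub, transpose_one, columnProj_transpose,
      transpose_transpose, Matrix.sub_mul, Matrix.one_mul, columnProj_mul_self hB, sub_self,
      transpose_zero]
  rw [hsplit]
  refine eucNorm_add_sq_of_dotProduct_eq_zero ?_
  rw [dotProduct_comm, dotProduct_mulVec, ← mulVec_transpose, mulVec_mulVec, hker, zero_mulVec,
    zero_dotProduct]

end LeastSquares

/-! ### Gradients -/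

section Gradient

variable {m n : ℕ}

theorem fderiv_eq_gradv_dotProduct (f : (Fin n → ℝ) → ℝ) (x v : Fin n → ℝ) :
    fderiv ℝ f x v = gradv f x ⬝ᵥ v := by
  conv_lhs => rw [pi_eq_sum_univ' v]
  simp only [map_sum, map_smul, smul_eq_mul, dotProduct, gradv, mul_comm]

theorem differentiable_mulVec (A : Matrix (Fin m) (Fin n) ℝ) : Differentiable ℝ A.mulVec :=
  A.mulVecLin.toContinuousLinearMap.differentiable

theorem gradv_comp_mulVec {f : (Fin m → ℝ) → ℝ} {A : Matrix (Fin m) (Fin n) ℝ} {x : Fin n → ℝ}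
    (hf : DifferentiableAt ℝ f (A *ᵥ x)) :
    gradv (fun x => f (A *ᵥ x)) x = Aᵀ *ᵥ gradv f (A *ᵥ x) := by
  have hA : HasFDerivAt (fun x => A *ᵥ x) A.mulVecLin.toContinuousLinearMap x :=
    A.mulVecLin.toContinuousLinearMap.hasFDerivAt
  have hfA : HasFDerivAt (fun x => f (A *ᵥ x)) _ x := hf.hasFDerivAt.comp x hA
  ext i
  rw [gradv, hfA.fderiv, ContinuousLinearMap.comp_apply, fderiv_eq_gradv_dotProduct,
    LinearMap.coe_toContinuousLinearMap', mulVecLin_apply, mulVec_single_one, dotProduct_comm]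
  rfl

theorem differentiable_eucNorm_sq : Differentiable ℝ fun x : Fin n → ℝ => eucNorm x ^ 2 := by
  simp only [eucNorm_sq_eq_dotProduct, dotProduct]
  fun_prop

theorem gradv_eucNorm_sq (x : Fin n → ℝ) :
    gradv (fun x => eucNorm x ^ 2) x = (2 : ℝ) • x := by
  have hcoord (j : Fin n) : HasFDerivAt (fun x : Fin n → ℝ => x j)
      (.proj (R := ℝ) (φ := fun _ => ℝ) j) x :=
    hasFDerivAt_apply j x
  have hderiv : HasFDerivAt (fun x : Fin n → ℝ => ∑ j, x j * x j) _ x :=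
    .fun_sum fun j _ => (hcoord j).mul (hcoord j)
  ext i
  simp only [gradv, eucNorm_sq_eq_dotProduct, dotProduct]
  rw [hderiv.fderiv]
  simp [Pi.single_apply, two_mul, Finset.sum_add_distrib]

theorem gradv_eucNorm_mulVec_sq (N : Matrix (Fin m) (Fin n) ℝ) (x : Fin n → ℝ) :
    gradv (fun x => eucNorm (N *ᵥ x) ^ 2) x = (2 : ℝ) • (Nᵀ * N) *ᵥ x := by
  rw [gradv_comp_mulVec (differentiable_eucNorm_sq _), gradv_eucNorm_sq, mulVec_smul,
    mulVec_mulVec]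

theorem gradv_const_add_add_const_mul {f g : (Fin n → ℝ) → ℝ} {x : Fin n → ℝ}
    (hf : DifferentiableAt ℝ f x) (hg : DifferentiableAt ℝ g x) (a c : ℝ) :
    gradv (fun x => a + (f x + c * g x)) x = gradv f x + c • gradv g x := by
  ext i
  simp only [gradv, fderiv_const_add, fderiv_fun_add hf (hg.const_mul c), fderiv_const_mul hg]
  rfl

end Gradient

/-! ### Gaussian smoothing -/

section Smoothing

variable {Ω E : Type*} [MeasurableSpace Ω] {μ : Measure Ω} {p : Ω → ℝ}

theorem integral_mul_pos {K : Ω → ℝ} (hK : ∀ ω, 0 < K ω) (hp : 0 ≤ p)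
    (hp_pos : 0 < ∫ ω, p ω ∂μ) (hKp : Integrable (fun ω => K ω * p ω) μ) :
    0 < ∫ ω, K ω * p ω ∂μ := by
  have hp_int : Integrable p μ := not_imp_comm.mp integral_undef hp_pos.ne'
  have hsupp : (Function.support fun ω => K ω * p ω) = Function.support p := by
    ext ω
    simp [(hK ω).ne']
  rw [integral_pos_iff_support_of_nonneg (fun ω => mul_nonneg (hK ω).le (hp ω)) hKp, hsupp]
  exact (integral_pos_iff_support_of_nonneg hp hp_int).mp hp_pos

section NormedGroup

variable [NormedAddCommGroup E] {φ : E → ℝ} {C C' : ℝ} {g : Ω → E}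

theorem integrable_comp_sub_mul (hφ : Continuous φ) (hC : ∀ x, ‖φ x‖ ≤ C)
    (hg : AEStronglyMeasurable g μ) (hp : Integrable p μ) (x : E) :
    Integrable (fun ω => φ (x - g ω) * p ω) μ :=
  hp.bdd_mul (hφ.comp_aestronglyMeasurable (aestronglyMeasurable_const.sub hg))
    (.of_forall fun _ => hC _)

theorem differentiable_integral_comp_sub_mul [NormedSpace ℝ E] (hφ : ContDiff ℝ 1 φ)
    (hC : ∀ x, ‖φ x‖ ≤ C) (hC' : ∀ x, ‖fderiv ℝ φ x‖ ≤ C') (hg : AEStronglyMeasurable g μ)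
    (hp : Integrable p μ) : Differentiable ℝ fun x => ∫ ω, φ (x - g ω) * p ω ∂μ := by
  intro x₀
  have hint := integrable_comp_sub_mul hφ.continuous hC hg hp
  refine (hasFDerivAt_integral_of_dominated_of_fderiv_le
    (F' := fun x ω => p ω • fderiv ℝ φ (x - g ω)) (bound := fun ω => ‖p ω‖ * C') Filter.univ_mem
    (.of_forall fun x => (hint x).aestronglyMeasurable) (hint x₀) ?_
    (.of_forall fun ω x _ => ?_) (hp.norm.mul_const C')
    (.of_forall fun ω x _ => ?_)).differentiableAt
  · exact hp.aestronglyMeasurable.smul <| (hφ.continuous_fderiv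
      one_ne_zero).comp_aestronglyMeasurable (aestronglyMeasurable_const.sub hg)
  · rw [norm_smul]
    gcongr
    exact hC' _
  · have hφx := (hφ.differentiable one_ne_zero (x - g ω)).hasFDerivAt
    exact (hφx.comp x ((hasFDerivAt_id x).sub_const (g ω))).mul_const (p ω)

theorem norm_exp_neg_norm_sq_div_two_le (x : E) :
    ‖Real.exp (-‖x‖ ^ 2 / 2)‖ ≤ 1 := by
  rw [Real.norm_eq_abs, Real.abs_exp, Real.exp_le_one_iff]
  have := sq_nonneg ‖x‖
  linarith

end NormedGroup

section GaussianProfile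

variable [NormedAddCommGroup E] [InnerProductSpace ℝ E]

theorem contDiff_exp_neg_norm_sq_div_two :
    ContDiff ℝ 1 fun x : E => Real.exp (-‖x‖ ^ 2 / 2) :=
  ((contDiff_norm_sq ℝ).neg.div_const 2).exp

theorem norm_fderiv_exp_neg_norm_sq_div_two_le (x : E) :
    ‖fderiv ℝ (fun x : E => Real.exp (-‖x‖ ^ 2 / 2)) x‖ ≤ 1 := by
  have hderiv : HasFDerivAt (fun x : E => Real.exp (-‖x‖ ^ 2 / 2))
      (-Real.exp (-‖x‖ ^ 2 / 2) • innerSL ℝ x) x := by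
    refine ((hasStrictFDerivAt_norm_sq x).hasFDerivAt.neg.mul_const 2⁻¹).exp.congr_fderiv ?_
    ext v
    simp [div_eq_mul_inv]
  -- `u ≤ 1 + u² / 2 ≤ exp (u² / 2)`
  have hexp : ‖x‖ ≤ Real.exp (‖x‖ ^ 2 / 2) := by
    nlinarith [Real.add_one_le_exp (‖x‖ ^ 2 / 2), sq_nonneg (‖x‖ - 1)]
  rw [hderiv.fderiv, norm_smul, norm_neg, innerSL_apply_norm, Real.norm_eq_abs, Real.abs_exp,
    neg_div, Real.exp_neg]
  exact inv_mul_le_one_of_le₀ hexp (Real.exp_pos _).le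

end GaussianProfile

end Smoothing

/-! ### Gaussian densities -/

section GaussianDensity

variable {d k n : ℕ}

theorem gaussD_zero_zero_pos {S : Matrix (Fin n) (Fin n) ℝ} (hS : 0 < S.det) :
    0 < gaussD n 0 0 S := by
  unfold gaussD
  positivity

theorem gaussD_eq_of_inv_eq {m : ℕ} {S : Matrix (Fin n) (Fin n) ℝ} {W : Matrix (Fin m) (Fin n) ℝ}
    (hS : S⁻¹ = Wᵀ * W) (x μ : Fin n → ℝ) :
    gaussD n x μ S = gaussD n 0 0 S * Real.exp (-eucNorm (W *ᵥ (x - μ)) ^ 2 / 2) := by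
  have hquad : eucNorm (W *ᵥ (x - μ)) ^ 2 = (x - μ) ⬝ᵥ S⁻¹ *ᵥ (x - μ) := by
    rw [eucNorm_sq_eq_dotProduct, hS, ← mulVec_mulVec, dotProduct_mulVec _ Wᵀ, vecMul_transpose]
  simp [gaussD, hquad]

theorem gaussD_mulVec_eq {m : ℕ} {S : Matrix (Fin d) (Fin d) ℝ} {W : Matrix (Fin m) (Fin d) ℝ}
    (hS : S⁻¹ = Wᵀ * W) {β : Matrix (Fin d) (Fin k) ℝ} (hWβ : Function.Injective (W * β).mulVec)
    (r : Fin d → ℝ) (g : Fin k → ℝ) :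
    gaussD d r (β *ᵥ g) S =
      gaussD d 0 0 S / gaussD k 0 0 ((W * β)ᵀ * (W * β))⁻¹
        * Real.exp (-eucNorm (((1 - columnProj (W * β)) * W) *ᵥ r) ^ 2 / 2)
        * gaussD k ((leastSquares (W * β) * W) *ᵥ r) g ((W * β)ᵀ * (W * β))⁻¹ := by
  have hgram : ((W * β)ᵀ * (W * β))⁻¹⁻¹ = (W * β)ᵀ * (W * β) :=
    nonsing_inv_nonsing_inv _ (isUnit_det_gram hWβ)
  have hpos : 0 < gaussD k 0 0 ((W * β)ᵀ * (W * β))⁻¹ :=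
    gaussD_zero_zero_pos (posDef_gram hWβ).inv.det_pos
  rw [gaussD_eq_of_inv_eq hS r (β *ᵥ g), gaussD_eq_of_inv_eq hgram _ g, mulVec_sub, mulVec_mulVec,
    eucNorm_sub_mulVec_sq hWβ, mulVec_mulVec, mulVec_mulVec, neg_add, add_div, Real.exp_add]
  field_simp

end GaussianDensity

/-! ### The diffused factor model -/

section FactorModel

variable {d k : ℕ} {β : Matrix (Fin d) (Fin k) ℝ} {σ : Fin d → ℝ} {t : ℝ} {p : (Fin k → ℝ) → ℝ}

theorem LamInvSqrt_transpose (σ : Fin d → ℝ) (t : ℝ) : (LamInvSqrt σ t)ᵀ = LamInvSqrt σ t :=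
  diagonal_transpose _

theorem diagonal_sqrt_mul_LamInvSqrt (hΛ : ∀ i, 0 < hf t + σ i ^ 2 * af t ^ 2) :
    (diagonal fun i => √(hf t + σ i ^ 2 * af t ^ 2)) * LamInvSqrt σ t = 1 := by
  rw [LamInvSqrt, diagonal_mul_diagonal, ← diagonal_one]
  exact congrArg diagonal (funext fun i => mul_inv_cancel₀ (Real.sqrt_pos.mpr (hΛ i)).ne')

theorem Lam_inv (hΛ : ∀ i, 0 < hf t + σ i ^ 2 * af t ^ 2) :
    (Lam σ t)⁻¹ = (LamInvSqrt σ t)ᵀ * LamInvSqrt σ t := by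
  refine inv_eq_right_inv ?_
  rw [LamInvSqrt_transpose, Lam, LamInvSqrt, diagonal_mul_diagonal, diagonal_mul_diagonal,
    ← diagonal_one]
  refine congrArg diagonal (funext fun i => ?_)
  rw [← mul_inv, Real.mul_self_sqrt (hΛ i).le, mul_inv_cancel₀ (hΛ i).ne']

theorem Gam_eq_inv_gram (hΛ : ∀ i, 0 < hf t + σ i ^ 2 * af t ^ 2) :
    Gam β σ t = ((LamInvSqrt σ t * β)ᵀ * (LamInvSqrt σ t * β))⁻¹ := by
  rw [Gam, Lam_inv hΛ, transpose_mul]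
  simp only [Matrix.mul_assoc]

theorem Tproj_eq_columnProj (hΛ : ∀ i, 0 < hf t + σ i ^ 2 * af t ^ 2) :
    Tproj β σ t = columnProj (LamInvSqrt σ t * β) := by
  rw [Tproj, Gam_eq_inv_gram hΛ, columnProj, leastSquares, transpose_mul (LamInvSqrt σ t),
    LamInvSqrt_transpose]
  simp only [Matrix.mul_assoc]

theorem Gam_mul_transpose_mul_Lam_inv (hΛ : ∀ i, 0 < hf t + σ i ^ 2 * af t ^ 2) :
    Gam β σ t * βᵀ * (Lam σ t)⁻¹ = leastSquares (LamInvSqrt σ t * β) * LamInvSqrt σ t := by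
  rw [Gam_eq_inv_gram hΛ, Lam_inv hΛ, leastSquares, transpose_mul (LamInvSqrt σ t)]
  simp only [Matrix.mul_assoc]

theorem LamInvSqrt_mul_injective (hβ : Function.Injective β.mulVec)
    (hΛ : ∀ i, 0 < hf t + σ i ^ 2 * af t ^ 2) :
    Function.Injective (LamInvSqrt σ t * β).mulVec := by
  have := (mulVec_injective_of_mul_eq_one (diagonal_sqrt_mul_LamInvSqrt hΛ)).comp hβ
  simpa only [Function.comp_def, mulVec_mulVec] using this

theorem pT_eq (hβ : Function.Injective β.mulVec) (hΛ : ∀ i, 0 < hf t + σ i ^ 2 * af t ^ 2)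
    (p : (Fin k → ℝ) → ℝ) (r : Fin d → ℝ) :
    pT β σ p t r =
      gaussD d 0 0 (Lam σ t) / gaussD k 0 0 (Gam β σ t)
        * Real.exp (-eucNorm (((1 - Tproj β σ t) * LamInvSqrt σ t) *ᵥ r) ^ 2 / 2)
        * pTfac β σ p t ((Gam β σ t * βᵀ * (Lam σ t)⁻¹) *ᵥ r) := by
  rw [Gam_mul_transpose_mul_Lam_inv hΛ, Tproj_eq_columnProj hΛ]
  simp only [pT, pTfac, ← mulVec_smul, gaussD_mulVec_eq (Lam_inv hΛ)
    (LamInvSqrt_mul_injective hβ hΛ), Gam_eq_inv_gram hΛ, mul_assoc, integral_const_mul]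

theorem Lam_det_pos (hΛ : ∀ i, 0 < hf t + σ i ^ 2 * af t ^ 2) : 0 < (Lam σ t).det :=
  (PosDef.diagonal hΛ).det_pos

theorem Gam_det_pos (hβ : Function.Injective β.mulVec)
    (hΛ : ∀ i, 0 < hf t + σ i ^ 2 * af t ^ 2) : 0 < (Gam β σ t).det := by
  rw [Gam_eq_inv_gram hΛ]
  exact (posDef_gram (LamInvSqrt_mul_injective hβ hΛ)).inv.det_pos

theorem pTfac_eq (hβ : Function.Injective β.mulVec) (hΛ : ∀ i, 0 < hf t + σ i ^ 2 * af t ^ 2)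
    (p : (Fin k → ℝ) → ℝ) (y : Fin k → ℝ) :
    pTfac β σ p t y = gaussD k 0 0 (Gam β σ t) * ∫ f, Real.exp
      (-‖WithLp.toLp 2 ((LamInvSqrt σ t * β) *ᵥ y)
        - WithLp.toLp 2 ((LamInvSqrt σ t * β) *ᵥ (af t • f))‖ ^ 2 / 2) * p f := by
  have hinv : (Gam β σ t)⁻¹ = (LamInvSqrt σ t * β)ᵀ * (LamInvSqrt σ t * β) := by
    rw [Gam_eq_inv_gram hΛ,
      nonsing_inv_nonsing_inv _ (isUnit_det_gram (LamInvSqrt_mul_injective hβ hΛ))]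
  simp only [pTfac, gaussD_eq_of_inv_eq hinv y, mul_assoc, integral_const_mul, mulVec_sub,
    eucNorm_eq_norm_toLp, WithLp.toLp_sub]

theorem aestronglyMeasurable_toLp_mulVec_smul {m : ℕ} (B : Matrix (Fin m) (Fin k) ℝ) (a : ℝ) :
    AEStronglyMeasurable (fun f : Fin k → ℝ => WithLp.toLp 2 (B *ᵥ (a • f))) := by
  have : Continuous fun f : Fin k → ℝ => WithLp.toLp 2 (B *ᵥ (a • f)) := by fun_prop
  exact this.aestronglyMeasurable

theorem differentiable_pTfac (hβ : Function.Injective β.mulVec)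
    (hΛ : ∀ i, 0 < hf t + σ i ^ 2 * af t ^ 2) (hp : Integrable p) :
    Differentiable ℝ (pTfac β σ p t) := by
  have hsmooth := differentiable_integral_comp_sub_mul contDiff_exp_neg_norm_sq_div_two
    norm_exp_neg_norm_sq_div_two_le norm_fderiv_exp_neg_norm_sq_div_two_le
    (aestronglyMeasurable_toLp_mulVec_smul (LamInvSqrt σ t * β) (af t)) hp
  have hlin : Differentiable ℝ fun y => WithLp.toLp 2 ((LamInvSqrt σ t * β) *ᵥ y) :=
    (PiLp.continuousLinearEquiv 2 ℝ fun _ : Fin d => ℝ).symm.differentiable.comp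
      (differentiable_mulVec _)
  rw [funext (pTfac_eq hβ hΛ p)]
  exact (hsmooth.comp hlin).const_mul _

theorem pTfac_pos (hβ : Function.Injective β.mulVec) (hΛ : ∀ i, 0 < hf t + σ i ^ 2 * af t ^ 2)
    (hp_nonneg : 0 ≤ p) (hp_pos : 0 < ∫ f, p f) (y : Fin k → ℝ) : 0 < pTfac β σ p t y := by
  have hp : Integrable p := not_imp_comm.mp integral_undef hp_pos.ne'
  rw [pTfac_eq hβ hΛ]
  refine mul_pos (gaussD_zero_zero_pos (Gam_det_pos hβ hΛ)) <|
    integral_mul_pos (fun _ => Real.exp_pos _) hp_nonneg hp_pos <|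
    integrable_comp_sub_mul contDiff_exp_neg_norm_sq_div_two.continuous
      norm_exp_neg_norm_sq_div_two_le
      (aestronglyMeasurable_toLp_mulVec_smul (LamInvSqrt σ t * β) (af t)) hp _

theorem gradv_log_pT (hβ : Function.Injective β.mulVec)
    (hΛ : ∀ i, 0 < hf t + σ i ^ 2 * af t ^ 2) (hp_nonneg : 0 ≤ p) (hp_pos : 0 < ∫ f, p f)
    (r : Fin d → ℝ) :
    gradv (fun r => Real.log (pT β σ p t r)) r =
      (Gam β σ t * βᵀ * (Lam σ t)⁻¹)ᵀ *ᵥ gradv (fun y => Real.log (pTfac β σ p t y))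
          ((Gam β σ t * βᵀ * (Lam σ t)⁻¹) *ᵥ r)
        - (LamInvSqrt σ t * (1 - Tproj β σ t) * LamInvSqrt σ t) *ᵥ r := by
  set A := Gam β σ t * βᵀ * (Lam σ t)⁻¹
  set N := (1 - Tproj β σ t) * LamInvSqrt σ t with hN
  have hfac_pos := pTfac_pos hβ hΛ hp_nonneg hp_pos
  have hlog : (fun r => Real.log (pT β σ p t r)) = fun r =>
      Real.log (gaussD d 0 0 (Lam σ t) / gaussD k 0 0 (Gam β σ t))
        + (Real.log (pTfac β σ p t (A *ᵥ r)) + (-1 / 2) * eucNorm (N *ᵥ r) ^ 2) := by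
    funext r
    have hc : 0 < gaussD d 0 0 (Lam σ t) / gaussD k 0 0 (Gam β σ t) :=
      div_pos (gaussD_zero_zero_pos (Lam_det_pos hΛ)) (gaussD_zero_zero_pos (Gam_det_pos hβ hΛ))
    rw [pT_eq hβ hΛ, Real.log_mul (by positivity) (hfac_pos _).ne',
      Real.log_mul hc.ne' (Real.exp_ne_zero _), Real.log_exp]
    ring
  have hquad : Nᵀ * N = LamInvSqrt σ t * (1 - Tproj β σ t) * LamInvSqrt σ t := by
    have hproj := (isStarProjection_columnProj (LamInvSqrt_mul_injective hβ hΛ)).one_sub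
    rw [hN, transpose_mul, LamInvSqrt_transpose, Tproj_eq_columnProj hΛ, transpose_sub,
      transpose_one, columnProj_transpose, Matrix.mul_assoc, ← Matrix.mul_assoc (1 - _),
      hproj.isIdempotentElem.eq, Matrix.mul_assoc]
  have hlogfac : Differentiable ℝ fun y => Real.log (pTfac β σ p t y) :=
    (differentiable_pTfac hβ hΛ (not_imp_comm.mp integral_undef hp_pos.ne')).log
      fun y => (hfac_pos y).ne'
  have hlogfac_comp : Differentiable ℝ fun r => Real.log (pTfac β σ p t (A *ᵥ r)) :=
    hlogfac.comp (differentiable_mulVec A)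
  have hquad_diff : Differentiable ℝ fun r => eucNorm (N *ᵥ r) ^ 2 :=
    differentiable_eucNorm_sq.comp (differentiable_mulVec N)
  rw [hlog, gradv_const_add_add_const_mul (hlogfac_comp r) (hquad_diff r),
    gradv_comp_mulVec (hlogfac _), gradv_eucNorm_mulVec_sq, hquad, smul_smul, sub_eq_add_neg]
  norm_num [← sub_eq_add_neg]

section OpNorm

open scoped Matrix.Norms.L2Operator

variable {a b : ℝ}

theorem l2_opNorm_LamInvSqrt_le (ha : 0 < a) (hΛ : ∀ i, a ≤ hf t + σ i ^ 2 * af t ^ 2) :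
    ‖LamInvSqrt σ t‖ ≤ (√a)⁻¹ := by
  rw [LamInvSqrt, l2_opNorm_diagonal, pi_norm_le_iff_of_nonneg (by positivity)]
  intro i
  rw [Real.norm_of_nonneg (by positivity)]
  gcongr
  exact hΛ i

theorem l2_opNorm_diagonal_sqrt_le {v : Fin d → ℝ} (hv : ∀ i, v i ≤ b) :
    ‖diagonal fun i => √(v i)‖ ≤ √b := by
  rw [l2_opNorm_diagonal, pi_norm_le_iff_of_nonneg (Real.sqrt_nonneg b)]
  intro i
  rw [Real.norm_of_nonneg (Real.sqrt_nonneg _)]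
  exact Real.sqrt_le_sqrt (hv i)

theorem l2_opNorm_Gam_mul_transpose_mul_Lam_inv_le (hβ : βᵀ * β = 1) (ha : 0 < a)
    (hΛ : ∀ i, hf t + σ i ^ 2 * af t ^ 2 ∈ Set.Icc a b) :
    ‖Gam β σ t * βᵀ * (Lam σ t)⁻¹‖ ≤ √b / √a := by
  have hΛ_pos := fun i => ha.trans_le (hΛ i).1
  calc
    _ = ‖leastSquares (LamInvSqrt σ t * β) * LamInvSqrt σ t‖ := by
      rw [Gam_mul_transpose_mul_Lam_inv hΛ_pos]
    _ ≤ ‖leastSquares (LamInvSqrt σ t * β)‖ * ‖LamInvSqrt σ t‖ := l2_opNorm_mul _ _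
    _ ≤ √b * (√a)⁻¹ := by
      gcongr
      · exact (l2_opNorm_leastSquares_mul_le hβ (diagonal_sqrt_mul_LamInvSqrt hΛ_pos)).trans
          (l2_opNorm_diagonal_sqrt_le fun i => (hΛ i).2)
      · exact l2_opNorm_LamInvSqrt_le ha fun i => (hΛ i).1

theorem l2_opNorm_LamInvSqrt_mul_one_sub_Tproj_mul_le (hβ : Function.Injective β.mulVec)
    (ha : 0 < a) (hΛ : ∀ i, a ≤ hf t + σ i ^ 2 * af t ^ 2) :
    ‖LamInvSqrt σ t * (1 - Tproj β σ t) * LamInvSqrt σ t‖ ≤ 1 / a := by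
  have hΛ_pos := fun i => ha.trans_le (hΛ i)
  have hW := l2_opNorm_LamInvSqrt_le ha hΛ
  have hT : ‖1 - Tproj β σ t‖ ≤ 1 := by
    rw [Tproj_eq_columnProj hΛ_pos]
    exact (isStarProjection_columnProj (LamInvSqrt_mul_injective hβ hΛ_pos)).one_sub.norm_le
  calc
    _ ≤ ‖LamInvSqrt σ t‖ * ‖1 - Tproj β σ t‖ * ‖LamInvSqrt σ t‖ :=
      norm_mul₃_le
    _ ≤ (√a)⁻¹ * 1 * (√a)⁻¹ := by gcongr
    _ = 1 / a := by rw [mul_one, ← mul_inv, Real.mul_self_sqrt ha.le, one_div]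

end OpNorm

theorem hf_add_sq_mul_af_sq_pos (ht : 0 ≤ t) {s : ℝ} (hs : 0 < s) :
    0 < hf t + s ^ 2 * af t ^ 2 := by
  have haf_pos : 0 < af t := Real.exp_pos _
  have haf_le : af t ≤ 1 := Real.exp_le_one_iff.mpr (by linarith)
  have hhf : 0 ≤ hf t := sub_nonneg.mpr (pow_le_one₀ haf_pos.le haf_le)
  positivity

theorem hf_add_sq_mul_af_sq_mem_Icc {s lo hi : ℝ} (hlo : 0 ≤ lo) (hs : s ∈ Set.Icc lo hi) :
    hf t + s ^ 2 * af t ^ 2 ∈ Set.Icc (hf t + lo ^ 2 * af t ^ 2) (hf t + hi ^ 2 * af t ^ 2) := by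
  have hs_nonneg : 0 ≤ s := hlo.trans hs.1
  constructor <;> gcongr
  exacts [hs.1, hs.2]

open scoped Matrix.Norms.L2Operator in
theorem lipschitz_subspace_score_implies_lipschitz_score_general (hk : 0 < k) (hβ : βᵀ * β = 1)
    (hp_nonneg : 0 ≤ p) (hp_pos : 0 < ∫ f, p f) {a b : ℝ} (ha : 0 < a)
    (hΛ : ∀ i, hf t + σ i ^ 2 * af t ^ 2 ∈ Set.Icc a b) {L : ℝ}
    (hlip : ∀ y₁ y₂ : Fin k → ℝ,
      eucNorm (gradv (fun y => Real.log (pTfac β σ p t y)) y₁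
          - gradv (fun y => Real.log (pTfac β σ p t y)) y₂) ≤ L * eucNorm (y₁ - y₂))
    (r₁ r₂ : Fin d → ℝ) :
    eucNorm (gradv (fun r => Real.log (pT β σ p t r)) r₁
        - gradv (fun r => Real.log (pT β σ p t r)) r₂)
      ≤ (L * (b / a) + 1 / a) * eucNorm (r₁ - r₂) := by
  have hβ_inj := mulVec_injective_of_mul_eq_one hβ
  have hL : 0 ≤ L := nonneg_of_eucNorm_sub_le hk hlip
  have hb : 0 ≤ b := by
    have : Nonempty (Fin k) := ⟨⟨0, hk⟩⟩
    obtain ⟨i⟩ := nonempty_of_transpose_mul_self_eq_one hβ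
    exact ha.le.trans ((hΛ i).1.trans (hΛ i).2)
  have hscore := gradv_log_pT hβ_inj (fun i => ha.trans_le (hΛ i).1) hp_nonneg hp_pos
  rw [hscore, hscore]
  refine (eucNorm_transpose_mulVec_comp_sub_mulVec_sub_le hL hlip _ _ _ _).trans ?_
  gcongr
  · exact eucNorm_nonneg _
  · rw [← Real.sq_sqrt (div_nonneg hb ha.le), Real.sqrt_div hb]
    exact pow_le_pow_left₀ (norm_nonneg _)
      (l2_opNorm_Gam_mul_transpose_mul_Lam_inv_le hβ ha hΛ) 2
  · exact l2_opNorm_LamInvSqrt_mul_one_sub_Tproj_mul_le hβ_inj ha fun i => (hΛ i).1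

end FactorModel

/-- Lipschitz subspace score implies Lipschitz full score. -/
theorem lipschitz_subspace_score_implies_lipschitz_score
    (d k : ℕ) (hk1 : 1 ≤ k) (hkd : k ≤ d)
    (β : Matrix (Fin d) (Fin k) ℝ) (hβ : βᵀ * β = 1)
    (pfac : (Fin k → ℝ) → ℝ)
    (hpfac_nonneg : ∀ f, 0 ≤ pfac f)
    (hpfac_prob : (∫ f : Fin k → ℝ, pfac f) = 1)
    (hpfac_smooth : ContDiff ℝ 2 pfac)
    (hpfac_mom : Integrable (fun f : Fin k → ℝ => eucNorm f ^ 2 * pfac f))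
    (σ : Fin d → ℝ) (σmax : ℝ)
    (hσpos : ∀ i, 0 < σ i)
    (hσdec : ∀ i j : Fin d, i ≤ j → σ j ≤ σ i)
    (hσmax : ∀ i, σ i ≤ σmax)
    (t : ℝ) (htnn : 0 ≤ t)
    (L : ℝ)
    (hlip : ∀ y₁ y₂ : Fin k → ℝ,
      eucNorm (gradv (fun y => Real.log (pTfac β σ pfac t y)) y₁
          - gradv (fun y => Real.log (pTfac β σ pfac t y)) y₂)
        ≤ L * eucNorm (y₁ - y₂)) :
    ∀ r₁ r₂ : Fin d → ℝ,
      eucNorm (gradv (fun r => Real.log (pT β σ pfac t r)) r₁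
          - gradv (fun r => Real.log (pT β σ pfac t r)) r₂)
        ≤ (L * ((hf t + σ ⟨0, by omega⟩ ^ 2 * af t ^ 2)
                  / (hf t + σ ⟨d - 1, by omega⟩ ^ 2 * af t ^ 2)) ^ 2
            + 1 / (hf t + σ ⟨d - 1, by omega⟩ ^ 2 * af t ^ 2)) * eucNorm (r₁ - r₂) := by
  have hΛ (i : Fin d) := hf_add_sq_mul_af_sq_mem_Icc (t := t) (hσpos ⟨d - 1, by omega⟩).le
    ⟨hσdec i _ (Fin.mk_le_mk.mpr (by omega)), hσdec ⟨0, by omega⟩ i (Fin.mk_le_mk.mpr (by omega))⟩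
  have ha := hf_add_sq_mul_af_sq_pos htnn (hσpos ⟨d - 1, by omega⟩)
  intro r₁ r₂
  refine (lipschitz_subspace_score_implies_lipschitz_score_general hk1 hβ hpfac_nonneg
    (hpfac_prob ▸ one_pos) ha hΛ hlip r₁ r₂).trans ?_
  gcongr
  · exact eucNorm_nonneg _
  · exact nonneg_of_eucNorm_sub_le hk1 hlip
  · exact le_self_pow₀ ((one_le_div ha).mpr (hΛ ⟨d - 1, by omega⟩).2) two_ne_zero
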